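/- arXiv:2501.10112 — 2 statements merged into one kernel-verified Lean document; each statement's English description precedes it below -/
import Mathlib

section
/- For every n ≥ 1, the complement of the path graph P_{2n-1} on 2n-1 vertices is word-representable. -/
/-- Two distinct letters `x` and `y` alternate in the word `w` if, after deleting all
letters other than `x` and `y`, no two consecutive letters of the remaining word are equal. -/
def Alternate {V : Type*} [DecidableEq V] (w : List V) (x y : V) : Prop :=
  (w.filter fun z => decide (z = x ∨ z = y)).Chain' (· ≠ ·)

/-- A word `w` represents the simple graph `G` if every vertex occurs in `w` at least once
and two distinct vertices alternate in `w` exactly when they are adjacent in `G`. -/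
def Represents {V : Type*} [DecidableEq V] (G : SimpleGraph V) (w : List V) : Prop :=
  (∀ v : V, v ∈ w) ∧ ∀ x y : V, x ≠ y → (Alternate w x y ↔ G.Adj x y)

/-- A simple graph is word-representable if some word represents it. -/
def WordRepresentable {V : Type*} [DecidableEq V] (G : SimpleGraph V) : Prop :=
  ∃ w : List V, Represents G w

/-- The path graph on `n` vertices: `i` and `j` are adjacent iff `|i - j| = 1`. -/
def pathGraph (n : ℕ) : SimpleGraph (Fin n) :=
  SimpleGraph.fromRel fun i j => (i : ℕ) + 1 = (j : ℕ)

/-!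
If a word is a concatenation of two permutations of the vertices, then two letters alternate in it
exactly when both permutations list them in the same order. The complement of a path arises in this
way. Start from `0, 1, 2, ...`; the first permutation moves each even number past its successor, the
second each odd number. Consecutive numbers are then inverted in exactly one of the two
permutations, and all other pairs keep their order in both.
-/

section Word

variable {V : Type*} [DecidableEq V]

lemma alternate_iff_isChain {w : List V} {x y : V} :
    Alternate w x y ↔ (w.filter fun z => decide (z = x ∨ z = y)).IsChain (· ≠ ·) :=
  Iff.rfl

lemma alternate_comm {w : List V} {x y : V} : Alternate w x y ↔ Alternate w y x := by
  simp only [alternate_iff_isChain, or_comm]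

lemma filter_eq_pair_of_pairwise {r : V → V → Prop} [Std.Asymm r] {L : List V}
    (hL : L.Pairwise r) {x y : V} (hx : x ∈ L) (hy : y ∈ L) (hxy : r x y) :
    L.filter (fun z => decide (z = x ∨ z = y)) = [x, y] := by
  refine (hL.filter _).eq_of_mem_iff (List.pairwise_pair.2 hxy) fun z => ?_
  simp only [List.mem_filter, decide_eq_true_eq, List.mem_pair, and_iff_right_iff_imp]
  rintro (rfl | rfl) <;> assumption

variable {r s : V → V → Prop} [Std.Asymm r] [Std.Asymm s] {L M : List V} {x y : V}

lemma alternate_append_of_rel_of_rel (hL : L.Pairwise r) (hM : M.Pairwise s)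
    (hxL : x ∈ L) (hyL : y ∈ L) (hxM : x ∈ M) (hyM : y ∈ M) (hr : r x y) (hs : s x y) :
    Alternate (L ++ M) x y := by
  have hne : x ≠ y := ne_of_irrefl hr
  rw [alternate_iff_isChain, List.filter_append, filter_eq_pair_of_pairwise hL hxL hyL hr,
    filter_eq_pair_of_pairwise hM hxM hyM hs]
  simp [hne, hne.symm]

lemma not_alternate_append_of_rel_of_rel_swap (hL : L.Pairwise r) (hM : M.Pairwise s)
    (hxL : x ∈ L) (hyL : y ∈ L) (hxM : x ∈ M) (hyM : y ∈ M) (hr : r x y) (hs : s y x) :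
    ¬Alternate (L ++ M) x y := by
  have hM_filter : M.filter (fun z => decide (z = x ∨ z = y)) = [y, x] := by
    simpa only [or_comm] using filter_eq_pair_of_pairwise hM hyM hxM hs
  rw [alternate_iff_isChain, List.filter_append, filter_eq_pair_of_pairwise hL hxL hyL hr,
    hM_filter]
  simp

end Word

section Concordance

variable {V α β : Type*}

/-- The graph joining two vertices whenever `f` and `g` order them strictly and in the same way.
For injective `f` and `g` into linear orders it is the permutation graph of the pair of linear
orders obtained from `f` and the reverse of `g`. -/
def concordanceGraph [Preorder α] [Preorder β] (f : V → α) (g : V → β) : SimpleGraph V where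
  Adj x y := (f x < f y ∧ g x < g y) ∨ (f y < f x ∧ g y < g x)
  symm := ⟨fun _ _ => Or.symm⟩
  loopless := ⟨by simp⟩

variable [LinearOrder α] [LinearOrder β]

lemma exists_forall_mem_pairwise_lt [Finite V] {f : V → α} (hf : f.Injective) :
    ∃ L : List V, (∀ v, v ∈ L) ∧ L.Pairwise (fun x y => f x < f y) := by
  have := Fintype.ofFinite V
  let := LinearOrder.lift' f hf
  exact ⟨Finset.univ.sort, by simp, (Finset.sortedLT_sort Finset.univ).pairwise⟩

theorem wordRepresentable_concordanceGraph [Finite V] [DecidableEq V] {f : V → α} {g : V → β}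
    (hf : f.Injective) (hg : g.Injective) : WordRepresentable (concordanceGraph f g) := by
  obtain ⟨L, hL, hLf⟩ := exists_forall_mem_pairwise_lt hf
  obtain ⟨M, hM, hMg⟩ := exists_forall_mem_pairwise_lt hg
  have : Std.Asymm fun x y => f x < f y := ⟨fun _ _ => lt_asymm⟩
  have : Std.Asymm fun x y => g x < g y := ⟨fun _ _ => lt_asymm⟩
  refine ⟨L ++ M, fun v => List.mem_append_left _ (hL v), fun x y hxy => ?_⟩
  wlog hfxy : f x < f y generalizing x y
  · rw [alternate_comm, SimpleGraph.adj_comm]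
    exact this y x hxy.symm ((hf.ne hxy).lt_or_gt.resolve_left hfxy)
  have hadj : (concordanceGraph f g).Adj x y ↔ g x < g y := by
    simp [concordanceGraph, hfxy, hfxy.not_gt]
  rw [hadj]
  rcases (hg.ne hxy).lt_or_gt with hgxy | hgyx
  · exact iff_of_true (alternate_append_of_rel_of_rel hLf hMg (hL x) (hL y) (hM x) (hM y)
      hfxy hgxy) hgxy
  · exact iff_of_false (not_alternate_append_of_rel_of_rel_swap hLf hMg (hL x) (hL y) (hM x) (hM y)
      hfxy hgyx) hgyx.not_gt

end Concordance

/-- The key that sorts the natural numbers so that each number of parity `r` comes right after its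
successor: `1, 0, 3, 2, ...` for `r = 0` and `0, 2, 1, 4, 3, ...` for `r = 1`. -/
def parityShift (r i : ℕ) : ℕ :=
  if i % 2 = r then i + 2 else i

lemma parityShift_injective (r : ℕ) : (parityShift r).Injective := by
  intro i j h
  unfold parityShift at h
  split_ifs at h <;> omega

lemma parityShift_concordant_iff {i j : ℕ} :
    (parityShift 0 i < parityShift 0 j ∧ parityShift 1 i < parityShift 1 j) ↔ i + 1 < j := by
  unfold parityShift
  split_ifs <;> omega

lemma compl_pathGraph_adj {n : ℕ} {x y : Fin n} :
    (pathGraph n)ᶜ.Adj x y ↔ (x : ℕ) + 1 < y ∨ (y : ℕ) + 1 < x := by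
  simp only [SimpleGraph.compl_adj, pathGraph, SimpleGraph.fromRel_adj, ne_eq, Fin.ext_iff]
  omega

lemma compl_pathGraph_eq_concordanceGraph (n : ℕ) :
    (pathGraph n)ᶜ =
      concordanceGraph (fun x : Fin n => parityShift 0 x) (fun x : Fin n => parityShift 1 x) := by
  ext x y
  simp only [compl_pathGraph_adj, concordanceGraph, parityShift_concordant_iff]

theorem complement_pathGraph_odd_wordRepresentable_general (n : ℕ) :
    WordRepresentable (pathGraph n)ᶜ := by
  rw [compl_pathGraph_eq_concordanceGraph]
  exact wordRepresentable_concordanceGraph ((parityShift_injective 0).comp Fin.val_injective)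
    ((parityShift_injective 1).comp Fin.val_injective)

/-- The complement of the path graph `P_{2n-1}` on `2n-1` vertices is word-representable. -/
theorem complement_pathGraph_odd_wordRepresentable :
    ∀ n : ℕ, 1 ≤ n → WordRepresentable (pathGraph (2 * n - 1))ᶜ := fun n _ =>
  complement_pathGraph_odd_wordRepresentable_general (2 * n - 1)
end

section
/- For every n ≥ 3, the graph obtained from the complement of the crown graph H_{n,n} by adding one new vertex adjacent to all other vertices (equivalently, the complement of the graph G_1 obtained from H_{n,n} by adding an isolated vertex) is not word-representable. -/
/-- The graph `G_1`: the crown graph `H_{n,n}` (on vertex set `Fin n ⊕ Fin n`, where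
`x i` and `y j` are adjacent iff `i ≠ j`) together with one added isolated vertex
(encoded as `none` in the `Option` type). -/
def crownPlusIsolated (n : ℕ) : SimpleGraph (Option (Fin n ⊕ Fin n)) :=
  SimpleGraph.fromRel fun u v =>
    match u, v with
    | some (Sum.inl i), some (Sum.inr j) => i ≠ j
    | _, _ => False

/-!
A letter `x` alternates with `z` exactly when, along the prefixes of the word, the difference of
their counts takes at most two consecutive values. So if `z` is adjacent to all other vertices, the
count of each other letter, shifted by a constant, exceeds that of `z` by `0` or `1`. The shifted
counts of two such letters then differ by `-1`, `0` or `1`, and the letters alternate exactly when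
`-1` and `1` do not both occur, that is, when one shifted count dominates the other along all
prefixes. Hence deleting `z` leaves a comparability graph.

The complement of the crown graph is `K_n □ K_2`, where transitivity forces any two distinct
matching edges to be oriented oppositely; three pairwise opposite edges cannot exist.
-/

theorem forall_prefix_cons {α : Type*} {p : List α → Prop} {a : α} {w : List α} :
    (∀ u, u <+: a :: w → p u) ↔ p [] ∧ ∀ u, u <+: w → p (a :: u) := by
  simp only [List.prefix_cons_iff]
  grind

theorem isChain_ne_iff_cons_or_cons {α : Type*} {x y : α} {l : List α} (hxy : x ≠ y) :
    l.IsChain (· ≠ ·) ↔ (x :: l).IsChain (· ≠ ·) ∨ (y :: l).IsChain (· ≠ ·) := by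
  cases l with
  | nil => simp
  | cons a l =>
    simp only [List.isChain_cons_cons]
    grind

section Alternation

variable {V : Type*} [DecidableEq V] {w : List V} {x y z : V}

theorem isChain_ne_cons_filter_iff (hxy : x ≠ y) :
    (y :: w.filter fun v => decide (v = x ∨ v = y)).IsChain (· ≠ ·) ↔
      ∀ u, u <+: w → (u.count x : ℤ) - u.count y ∈ Set.Icc 0 1 := by
  induction w generalizing x y with
  | nil => simp
  | cons a w ih =>
    rw [forall_prefix_cons]
    rcases eq_or_ne a x with rfl | hax
    · have ih_swap := ih hxy.symm
      simp only [or_comm] at ih_swap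
      have hshift (u : List V) : ((a :: u).count a : ℤ) - (a :: u).count y ∈ Set.Icc 0 1 ↔
          (u.count y : ℤ) - u.count a ∈ Set.Icc 0 1 := by
        simp only [List.count_cons_self, List.count_cons_of_ne hxy, Set.mem_Icc]
        omega
      simp only [hshift, ← ih_swap]
      simp [hxy.symm]
    rcases eq_or_ne a y with rfl | hay
    · refine iff_of_false (by simp) fun h => ?_
      simpa [hax] using h.2 [] List.nil_prefix
    · simp only [List.count_cons_of_ne hax, List.count_cons_of_ne hay, ← ih hxy]
      simp [hax, hay]

theorem alternate_iff_exists_count_sub_mem_Icc (hxy : x ≠ y) :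
    Alternate w x y ↔
      ∃ c : ℤ, ∀ u, u <+: w → (u.count x : ℤ) - u.count y ∈ Set.Icc c (c + 1) := by
  have hchain_x := isChain_ne_cons_filter_iff (w := w) hxy.symm
  simp only [or_comm] at hchain_x
  refine (isChain_ne_iff_cons_or_cons hxy).trans ?_
  rw [hchain_x, isChain_ne_cons_filter_iff hxy]
  simp only [Set.mem_Icc]
  constructor
  · rintro (h | h)
    · exact ⟨-1, fun u hu => by have := h u hu; omega⟩
    · exact ⟨0, h⟩
  · rintro ⟨c, hc⟩
    have hnil : c ≤ 0 ∧ 0 ≤ c + 1 := by simpa using hc [] List.nil_prefix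
    obtain rfl | rfl : c = -1 ∨ c = 0 := by omega
    · exact .inl fun u hu => by have := hc u hu; omega
    · exact .inr hc

theorem alternate_iff_forall_le_or_forall_le {c d : ℤ} (hxy : x ≠ y)
    (hx : ∀ u, u <+: w → (u.count x : ℤ) - u.count z ∈ Set.Icc c (c + 1))
    (hy : ∀ u, u <+: w → (u.count y : ℤ) - u.count z ∈ Set.Icc d (d + 1)) :
    Alternate w x y ↔
      (∀ u, u <+: w → (u.count x : ℤ) - c ≤ u.count y - d) ∨
        ∀ u, u <+: w → (u.count y : ℤ) - d ≤ u.count x - c := by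
  rw [alternate_iff_exists_count_sub_mem_Icc hxy]
  simp only [Set.mem_Icc] at hx hy ⊢
  constructor
  · rintro ⟨e, he⟩
    rcases lt_or_ge e (c - d) with hlt | hge
    · left
      intro u hu
      linarith [he u hu, Int.add_one_le_of_lt hlt]
    · right
      intro u hu
      linarith [he u hu]
  · rintro (hle | hle)
    · refine ⟨c - d - 1, fun u hu => ?_⟩
      constructor <;> linarith [hx u hu, hy u hu, hle u hu]
    · refine ⟨c - d, fun u hu => ?_⟩
      constructor <;> linarith [hx u hu, hy u hu, hle u hu]

theorem eq_of_forall_prefix_count_sub_eq {c d : ℤ} (hx : x ∈ w)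
    (h : ∀ u, u <+: w → (u.count x : ℤ) - c = u.count y - d) : x = y := by
  obtain ⟨s, t, rfl⟩ := List.append_of_mem hx
  have before := h s (List.prefix_append s _)
  have after := h (s ++ [x]) (by simp)
  by_contra hxy
  simp only [List.count_append, List.count_singleton_self, List.count_singleton, beq_iff_eq, hxy,
    if_false, Nat.add_zero, Nat.cast_add, Nat.cast_one] at after
  omega

end Alternation

/-- A comparability graph: its edges are the pairs of distinct comparable elements for some partial
order on its vertices. -/
def IsComparabilityGraph {V : Type*} (G : SimpleGraph V) : Prop :=
  ∃ _ : PartialOrder V, ∀ x y, G.Adj x y ↔ x < y ∨ y < x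

theorem IsComparabilityGraph.of_embedding {V W : Type*} {G : SimpleGraph V} {H : SimpleGraph W}
    (hH : IsComparabilityGraph H) (f : G ↪g H) : IsComparabilityGraph G := by
  obtain ⟨_, hlt⟩ := hH
  exact ⟨PartialOrder.lift f f.injective, fun x y => f.map_adj_iff.symm.trans (hlt (f x) (f y))⟩

theorem WordRepresentable.isComparabilityGraph_induce_compl_singleton {V : Type*} [DecidableEq V]
    {G : SimpleGraph V} {z : V} (hG : WordRepresentable G) (hz : G.IsUniversal z) :
    IsComparabilityGraph (G.induce {z}ᶜ) := by
  obtain ⟨w, hmem, halt⟩ := hG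
  have hwindow (v : ({z}ᶜ : Set V)) :
      ∃ c : ℤ, ∀ u, u <+: w → (u.count v.1 : ℤ) - u.count z ∈ Set.Icc c (c + 1) :=
    (alternate_iff_exists_count_sub_mem_Icc v.2).1 ((halt v z v.2).2 (hz (Ne.symm v.2)).symm)
  choose c hc using hwindow
  let profile (v : ({z}ᶜ : Set V)) (u : {u // u <+: w}) : ℤ := u.1.count v.1 - c v
  have profile_injective : Function.Injective profile := fun x y hxy =>
    Subtype.ext <| eq_of_forall_prefix_count_sub_eq (hmem x) fun u hu => congrFun hxy ⟨u, hu⟩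
  refine ⟨PartialOrder.lift profile profile_injective, fun x y => ?_⟩
  change G.Adj x y ↔ profile x < profile y ∨ profile y < profile x
  rcases eq_or_ne x y with rfl | hne
  · simp
  have hne' : x.1 ≠ y.1 := Subtype.coe_injective.ne hne
  rw [← halt x y hne', alternate_iff_forall_le_or_forall_le hne' (hc x) (hc y),
    ← (profile_injective.ne hne).le_iff_lt, ← (profile_injective.ne hne.symm).le_iff_lt]
  simp only [Pi.le_def, Subtype.forall, profile]

theorem not_isComparabilityGraph_top_boxProd_top_bool {α : Type*} (hα : 3 ≤ ENat.card α) :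
    ¬ IsComparabilityGraph ((⊤ : SimpleGraph α) □ (⊤ : SimpleGraph Bool)) := by
  rintro ⟨_, hlt⟩
  simp only [SimpleGraph.boxProd_adj, SimpleGraph.top_adj] at hlt
  have opposite {i j : α} {b : Bool} (hij : i ≠ j) (h : (i, b) < (i, !b)) :
      (j, !b) < (j, b) := by
    have hrow : (i, b) < (j, b) :=
      ((hlt _ _).1 (by simp [hij])).resolve_right fun h' => by
        simpa [hij.symm] using (hlt _ _).2 (.inl (h'.trans h))
    exact ((hlt _ _).1 (by simp)).resolve_right fun h' => by
      simpa [hij] using (hlt _ _).2 (.inl (hrow.trans h'))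
  have : Nontrivial α := (ENat.one_lt_card_iff_nontrivial α).1 (lt_of_lt_of_le (by norm_num) hα)
  obtain ⟨i, j, hij⟩ := exists_pair_ne α
  obtain ⟨k, hki, hkj⟩ := ENat.exists_ne_ne_of_three_le hα i j
  have not_up (b : Bool) : ¬ (i, b) < (i, !b) := fun h => by
    have hj : (j, !b) < (j, !!b) := by simpa using opposite hij h
    have hk : (k, b) < (k, !b) := by simpa using opposite hkj.symm hj
    exact lt_asymm h (opposite hki hk)
  rcases (hlt (i, true) (i, false)).1 (by simp) with h | h
  · exact not_up true h
  · exact not_up false h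

/-- The prism `K_n □ K_2` as the complement of the crown graph `H_{n,n}`, for finding it in the
complement of `G_1`: `Bool` selects the side, `true` for the `y i` and `false` for the `x i`. -/
def boxProdEmbeddingCrownCompl (n : ℕ) :
    ((⊤ : SimpleGraph (Fin n)) □ (⊤ : SimpleGraph Bool)) ↪g
      (crownPlusIsolated n)ᶜ.induce {none}ᶜ where
  toFun p := ⟨some (if p.2 then .inr p.1 else .inl p.1), by simp⟩
  inj' := by
    rintro ⟨i, _ | _⟩ ⟨j, _ | _⟩ h <;> simp_all
  map_rel_iff' {p q} := by
    change (crownPlusIsolated n)ᶜ.Adj (some _) (some _) ↔ _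
    obtain ⟨i, _ | _⟩ := p <;> obtain ⟨j, _ | _⟩ := q <;>
      simp [crownPlusIsolated, @eq_comm _ j i]

/-- For every `n ≥ 3`, the complement of the graph `G_1` obtained from the crown graph
`H_{n,n}` by adding an isolated vertex (equivalently, the complement of `H_{n,n}` with an
all-adjacent vertex added) is not word-representable. -/
theorem complement_crownPlusIsolated_not_wordRepresentable :
    ∀ n : ℕ, 3 ≤ n → ¬ WordRepresentable (crownPlusIsolated n)ᶜ := by
  intro n hn hrep
  have hcomp : IsComparabilityGraph ((crownPlusIsolated n)ᶜ.induce {none}ᶜ) :=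
    hrep.isComparabilityGraph_induce_compl_singleton fun v hv => by
      simp [crownPlusIsolated, hv]
  have hcard : 3 ≤ ENat.card (Fin n) := by
    rw [ENat.card_eq_coe_fintype_card, Fintype.card_fin]
    exact_mod_cast hn
  exact not_isComparabilityGraph_top_boxProd_top_bool hcard
    (hcomp.of_embedding (boxProdEmbeddingCrownCompl n))
end
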